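/- Let g be a nonzero polynomial with rational coefficients in indeterminates T_1, T_3, T_5, …, where T_{2k−1} is assigned degree 2k−1, and let d be the maximal weighted degree of the monomials of g. Let n > d, and let f ∈ ℚ[x_1,…,x_n] be obtained from g by substituting T_{2k−1} ↦ p_{2k−1}(x_1,…,x_n) = x_1^{2k−1} + ⋯ + x_n^{2k−1}. Then f ≠ 0, and if x_1^{α_1} x_2^{α_2} ⋯ x_s^{α_s} (with α_s > 0) is the lexicographically largest monomial of f with respect to x_1 > x_2 > ⋯ > x_n, then α_1 > α_2 > ⋯ > α_s. -/

import Mathlib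

namespace PowerSumLex

open MvPolynomial

/-- The result of substituting the power sums `p_{2k-1}(x_1, …, x_n)` for the weighted
variables `T_{2k-1}` in the polynomial `g`. -/
noncomputable def psubst (n : ℕ) (g : MvPolynomial {k : ℕ // Odd k} ℚ) :
    MvPolynomial (Fin n) ℚ :=
  aeval (fun v : {k : ℕ // Odd k} =>
    ∑ i : Fin n, (X i : MvPolynomial (Fin n) ℚ) ^ (v : ℕ)) g

/-- Strict lexicographic comparison of monomials with respect to `x_1 > x_2 > ⋯ > x_n`:
the larger monomial has the larger exponent at the largest (smallest-index) variable on
which they differ. -/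
def MonLex {n : ℕ} (m m' : Fin n →₀ ℕ) : Prop :=
  ∃ i : Fin n, m i < m' i ∧ ∀ j : Fin n, j < i → m j = m' j

/-!
Power sums `p_a` of distinct positive degrees, no more of them than there are variables, are
algebraically independent in characteristic zero: the partial derivatives of a relation of least
degree would be relations of smaller degree unless the Jacobian vanishes, and at powers of two the
Jacobian becomes a Vandermonde determinant. A polynomial of weighted degree `d` involves at most `d`
of the `T_k`, whence `f ≠ 0`.

For odd `k` the substitution `x_j ↦ -x_i` cancels two terms of `p_k`, so it removes `x_i` from `f`.
Let `μ` be the leading exponent and suppose `μ i = μ j = a ≠ 0` with `i < j`. A monomial of `f`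
whose image under the substitution is proportional to that of `x^μ` agrees with `μ` away from `i`
and `j` and has exponents `b`, `2a - b` there; by symmetry `b` and `2a - b` may be exchanged, so
maximality of `μ` gives `b = a`. Hence the image of `x^μ`, which contains `x_i^(2a)`, cannot cancel:
a contradiction.
-/

section JacobianCriterion

lemma totalDegree_pderiv_lt {R σ : Type*} [CommSemiring R] {p : MvPolynomial σ R}
    (hp : p.totalDegree ≠ 0) (i : σ) : (pderiv i p).totalDegree < p.totalDegree := by
  rw [totalDegree, Finset.sup_lt_iff (Nat.pos_of_ne_zero hp)]
  intro m hm
  have hmem : m + Finsupp.single i 1 ∈ p.support := by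
    rw [mem_support_iff, coeff_pderiv] at hm
    exact mem_support_iff.2 (left_ne_zero_of_mul hm)
  calc m.degree < (m + Finsupp.single i 1).degree := by simp
    _ ≤ p.totalDegree := le_totalDegree hmem

lemma totalDegree_eq_zero_of_forall_pderiv_eq_zero {R σ : Type*} [CommSemiring R]
    [NoZeroDivisors R] [CharZero R] {p : MvPolynomial σ R} (hp : ∀ i, pderiv i p = 0) :
    p.totalDegree = 0 := by
  rw [totalDegree_eq_zero_iff]
  intro m hm i
  by_contra hmi
  have hsplit : m - Finsupp.single i 1 + Finsupp.single i 1 = m :=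
    tsub_add_cancel_of_le (Finsupp.single_le_iff.2 (Nat.one_le_iff_ne_zero.2 hmi))
  have hcoeff := coeff_pderiv (i := i) p (m - Finsupp.single i 1)
  rw [hp i, coeff_zero, hsplit, zero_eq_mul, ← Nat.cast_succ] at hcoeff
  exact hcoeff.elim (mem_support_iff.1 hm) (Nat.cast_ne_zero.2 (Nat.succ_ne_zero _))

lemma derivation_aeval {R A M ι : Type*} [CommSemiring R] [CommSemiring A] [Algebra R A]
    [AddCommMonoid M] [Module A M] [Module R M] [Fintype ι] (D : Derivation R A M) (f : ι → A)
    (p : MvPolynomial ι R) : D (aeval f p) = ∑ i, aeval f (pderiv i p) • D (f i) := by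
  classical
  induction p using MvPolynomial.induction_on with
  | C a => simp
  | add p q hp hq => simp only [map_add, hp, hq, add_smul, Finset.sum_add_distrib]
  | mul_X p k hp =>
    simp only [map_mul, aeval_X, D.leibniz, hp, pderiv_mul, pderiv_X, map_add, add_smul,
      Finset.sum_add_distrib, Finset.smul_sum]
    rw [add_comm]
    congr 1
    · simp only [mul_comm, mul_smul]
    · simp [Pi.single_apply, apply_ite, ite_smul]

theorem algebraicIndependent_of_det_derivation_ne_zero {R A ι : Type*} [CommRing R]
    [CharZero R] [Fintype ι] [DecidableEq ι] [CommRing A] [IsDomain A] [Algebra R A]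
    [FaithfulSMul R A] (f : ι → A) (D : ι → Derivation R A A)
    (hdet : (Matrix.of fun i j => D j (f i)).det ≠ 0) :
    AlgebraicIndependent R f := by
  have := (FaithfulSMul.algebraMap_injective R A).isDomain
  rw [algebraicIndependent_iff]
  intro p hp
  induction hd : p.totalDegree using Nat.strong_induction_on generalizing p with
  | _ d ih =>
    subst hd
    have haeval_pderiv : (fun i => aeval f (pderiv i p)) = 0 :=
      Matrix.eq_zero_of_vecMul_eq_zero hdet <| funext fun j =>
        (derivation_aeval (D j) f p).symm.trans (by rw [hp, map_zero, Pi.zero_apply])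
    have hconst : p.totalDegree = 0 := by
      by_contra hpos
      exact hpos <| totalDegree_eq_zero_of_forall_pderiv_eq_zero fun i =>
        ih _ (totalDegree_pderiv_lt hpos i) _ (congrFun haeval_pderiv i) rfl
    rw [totalDegree_eq_zero_iff_eq_C] at hconst
    rw [hconst, aeval_C] at hp
    rw [hconst, (FaithfulSMul.algebraMap_eq_zero_iff R A).1 hp, C_0]

end JacobianCriterion

section PowerSums

lemma pderiv_psum {R σ : Type*} [CommSemiring R] [Fintype σ] (i : σ) (k : ℕ) :
    pderiv i (psum σ R k) = (k : MvPolynomial σ R) * X i ^ (k - 1) := by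
  classical
  simp [psum, pderiv_X, Pi.single_apply]

variable {R σ ι : Type*} [CommRing R] [IsDomain R] [CharZero R] [Fintype σ] [Fintype ι]

-- At `x_(e j) = 2^j` the Jacobian is, up to the row factors `a i`, a Vandermonde determinant.
lemma det_pderiv_psum_ne_zero [DecidableEq ι] (e : ι ↪ σ) {a : ι → ℕ}
    (ha : Function.Injective a) (hpos : ∀ i, 0 < a i) :
    (Matrix.of fun i j => pderiv (e j) (psum σ R (a i))).det ≠ 0 := by
  let c := Fintype.equivFin ι
  let V := Matrix.vandermonde fun k => (2 : R) ^ (a (c.symm k) - 1)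
  have hV : V.det ≠ 0 := by
    refine Matrix.det_vandermonde_ne_zero_iff.2 fun k l hkl => c.symm.injective (ha ?_)
    have hexp : a (c.symm k) - 1 = a (c.symm l) - 1 :=
      Nat.pow_right_injective le_rfl (by exact_mod_cast hkl)
    have := hpos (c.symm k)
    have := hpos (c.symm l)
    omega
  let x : σ → R := Function.extend e (fun j => 2 ^ (c j : ℕ)) 0
  have heval : (eval x).mapMatrix (Matrix.of fun i j => pderiv (e j) (psum σ R (a i))) =
      Matrix.of fun i j => (a i : R) * V.submatrix c c i j := by
    ext i j
    simp [pderiv_psum, x, V, e.injective.extend_apply, pow_right_comm]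
  refine ne_of_apply_ne (eval x) ?_
  rw [RingHom.map_det, heval, Matrix.det_mul_column, Matrix.det_submatrix_equiv_self, map_zero]
  exact mul_ne_zero (Finset.prod_ne_zero_iff.2 fun i _ => Nat.cast_ne_zero.2 (hpos i).ne') hV

theorem algebraicIndependent_psum (hcard : Fintype.card ι ≤ Fintype.card σ) {a : ι → ℕ}
    (ha : Function.Injective a) (hpos : ∀ i, 0 < a i) :
    AlgebraicIndependent R fun i => psum σ R (a i) := by
  classical
  obtain ⟨e⟩ := Function.Embedding.nonempty_of_card_le hcard
  exact algebraicIndependent_of_det_derivation_ne_zero _ (fun j => pderiv (e j))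
    (det_pderiv_psum_ne_zero e ha hpos)

end PowerSums

section OddPowerSums

/-- The substitution `T_k ↦ p_k` of the odd power sums in the variables `σ`; the index of `T_k` is
the odd number `k` itself. -/
noncomputable def oddPsumHom (σ R : Type*) [CommSemiring R] [Fintype σ] :
    MvPolynomial {k : ℕ // Odd k} R →ₐ[R] MvPolynomial σ R :=
  aeval fun v => psum σ R v

variable {R σ : Type*} [Fintype σ]

theorem oddPsumHom_ne_zero [CommRing R] [IsDomain R] [CharZero R]
    {g : MvPolynomial {k : ℕ // Odd k} R} (hg : g ≠ 0) (hcard : g.vars.card ≤ Fintype.card σ) :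
    oddPsumHom σ R g ≠ 0 := by
  have hind : AlgebraicIndependent R fun v : g.vars => psum σ R v.1 :=
    algebraicIndependent_psum (by rwa [Fintype.card_coe])
      (Subtype.val_injective.comp Subtype.val_injective) fun v => v.1.2.pos
  have hinj := algebraicIndependent_comp_subtype (x := fun v : {k : ℕ // Odd k} => psum σ R v)
    (s := (g.vars : Set _)) |>.1 hind
  exact fun h0 => hg (hinj g g.mem_supported_vars h0)

variable [CommSemiring R]

lemma oddPsumHom_mem {S : Subalgebra R (MvPolynomial σ R)} (hS : ∀ k, Odd k → psum σ R k ∈ S)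
    (g : MvPolynomial {k : ℕ // Odd k} R) : oddPsumHom σ R g ∈ S := by
  have hrange : (oddPsumHom σ R).range ≤ S := by
    rw [oddPsumHom, ← Algebra.adjoin_range_eq_range_aeval, Algebra.adjoin_le_iff]
    rintro _ ⟨v, rfl⟩
    exact hS v v.2
  exact hrange ⟨g, rfl⟩

lemma oddPsumHom_isSymmetric (g : MvPolynomial {k : ℕ // Odd k} R) :
    (oddPsumHom σ R g).IsSymmetric :=
  oddPsumHom_mem (S := symmetricSubalgebra σ R) (fun k _ => psum_isSymmetric σ R k) g

end OddPowerSums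

section Cancellation

variable {σ : Type*} [DecidableEq σ]

/-- The substitution `x_j ↦ -x_i`. -/
noncomputable def negSubst (R : Type*) [CommRing R] (i j : σ) :
    MvPolynomial σ R →ₐ[R] MvPolynomial σ R :=
  aeval (Function.update X j (-X i))

/-- The polynomials satisfying the cancellation law of Schur's `P`- and `Q`-functions in the pair
`x_i, x_j`: after the substitution `x_j ↦ -x_i` the variable `x_i` no longer occurs. -/
noncomputable def cancellationSubalgebra (R : Type*) [CommRing R] (i j : σ) :
    Subalgebra R (MvPolynomial σ R) :=
  (supported R {i}ᶜ).comap (negSubst R i j)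

variable {R : Type*} [CommRing R]

lemma mem_cancellationSubalgebra {i j : σ} {f : MvPolynomial σ R} :
    f ∈ cancellationSubalgebra R i j ↔ negSubst R i j f ∈ supported R {i}ᶜ :=
  Iff.rfl

lemma psum_mem_cancellationSubalgebra [Fintype σ] {i j : σ} (hij : i ≠ j) {k : ℕ} (hk : Odd k) :
    psum σ R k ∈ cancellationSubalgebra R i j := by
  have hrest : negSubst R i j (psum σ R k) = ∑ l ∈ ({i, j} : Finset σ)ᶜ, X l ^ k := by
    rw [psum, ← Finset.sum_add_sum_compl {i, j}, Finset.sum_pair hij, map_add, map_sum]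
    have hpair : negSubst R i j (X i ^ k + X j ^ k) = 0 := by
      simp [negSubst, hij, hk.neg_pow]
    rw [hpair, zero_add]
    refine Finset.sum_congr rfl fun l hl => ?_
    have hlj : l ≠ j := by rintro rfl; simp at hl
    simp [negSubst, hlj]
  rw [mem_cancellationSubalgebra, hrest]
  refine Subalgebra.sum_mem _ fun l hl => Subalgebra.pow_mem _ ?_ k
  have hli : l ≠ i := by rintro rfl; simp at hl
  exact Algebra.subset_adjoin ⟨l, hli, rfl⟩

/-- The exponent of the image of the monomial `x^s` under `x_j ↦ -x_i`: the exponent of `x_j` is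
moved to `x_i`. -/
noncomputable def mergeExponent (i j : σ) (s : σ →₀ ℕ) : σ →₀ ℕ :=
  s.erase j + Finsupp.single i (s j)

lemma negSubst_monomial (i j : σ) (s : σ →₀ ℕ) (c : R) :
    negSubst R i j (monomial s c) = monomial (mergeExponent i j s) ((-1) ^ s j * c) := by
  have hfix : negSubst R i j (monomial (s.erase j) c) = monomial (s.erase j) c := by
    rw [negSubst, aeval_monomial, monomial_eq]
    refine congrArg (C c * ·) (Finsupp.prod_congr fun k hk => ?_)
    have hkj : k ≠ j := by rintro rfl; simp at hk
    rw [Function.update_of_ne hkj]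
  calc negSubst R i j (monomial s c)
      = negSubst R i j (monomial (s.erase j) c * X j ^ s j) := by
        rw [X_pow_eq_monomial, monomial_mul, mul_one, Finsupp.erase_add_single]
    _ = monomial (s.erase j) c * (-X i) ^ s j := by
        rw [map_mul, hfix, map_pow, negSubst, aeval_X, Function.update_self]
    _ = monomial (mergeExponent i j s) ((-1) ^ s j * c) := by
        rw [mergeExponent, neg_pow, X_pow_eq_monomial, mul_left_comm, monomial_mul, mul_one,
          ← C_mul_monomial]
        simp

lemma coeff_negSubst_eq_zero {i j : σ} {f : MvPolynomial σ R}
    (hf : f ∈ cancellationSubalgebra R i j) {m : σ →₀ ℕ} (hm : m i ≠ 0) :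
    coeff m (negSubst R i j f) = 0 := by
  by_contra hne
  have hvars : ((negSubst R i j f).vars : Set σ) ⊆ {i}ᶜ :=
    mem_supported.1 (mem_cancellationSubalgebra.1 hf)
  exact hvars ((mem_vars_iff_mem_support i).2
    ⟨m, mem_support_iff.2 hne, Finsupp.mem_support_iff.2 hm⟩) rfl

end Cancellation

section LexDegree

open MonomialOrder

variable {R σ : Type*} [LinearOrder σ] [WellFoundedGT σ] {i j : σ}

section CommSemiring

variable [CommSemiring R] {f : MvPolynomial σ R} {s : σ →₀ ℕ}

lemma apply_le_lex_degree (hs : s ∈ f.support) (heq : ∀ k < i, s k = lex.degree f k) :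
    s i ≤ lex.degree f i := by
  by_contra! hlt
  exact (lex.le_degree hs).not_gt (Finsupp.Lex.lt_iff.2 ⟨i, fun k hk => (heq k hk).symm, hlt⟩)

lemma apply_le_lex_degree_of_isSymmetric (hf : f.IsSymmetric) (hs : s ∈ f.support) (hij : i ≤ j)
    (heq : ∀ k < i, s k = lex.degree f k) : s j ≤ lex.degree f i := by
  have hswap : s.mapDomain (Equiv.swap i j) ∈ f.support := by
    rwa [mem_support_iff, ← hf (Equiv.swap i j), coeff_rename_mapDomain _ (Equiv.injective _),
      ← mem_support_iff]
  have hle := apply_le_lex_degree (i := i) hswap fun k hk => by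
    rw [Finsupp.mapDomain_equiv_apply, Equiv.symm_swap,
      Equiv.swap_apply_of_ne_of_ne hk.ne (hk.trans_le hij).ne, heq k hk]
  rwa [Finsupp.mapDomain_equiv_apply, Equiv.symm_swap, Equiv.swap_apply_left] at hle

lemma eq_lex_degree_of_mergeExponent_eq (hf : f.IsSymmetric) (hij : i < j)
    (heq : lex.degree f j = lex.degree f i) (hs : s ∈ f.support)
    (hmerge : mergeExponent i j s = mergeExponent i j (lex.degree f)) : s = lex.degree f := by
  have happly (k : σ) := DFunLike.congr_fun hmerge k
  have hrest (k : σ) (hki : k ≠ i) (hkj : k ≠ j) : s k = lex.degree f k := by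
    simpa [mergeExponent, hki, hkj, Ne.symm hki] using happly k
  have hsum : s i + s j = lex.degree f i + lex.degree f j := by
    simpa [mergeExponent, hij.ne] using happly i
  have hbelow (k : σ) (hk : k < i) := hrest k hk.ne (hk.trans hij).ne
  have hi := apply_le_lex_degree hs hbelow
  have hj := apply_le_lex_degree_of_isSymmetric hf hs hij.le hbelow
  ext k
  rcases eq_or_ne k i with rfl | hki
  · omega
  rcases eq_or_ne k j with rfl | hkj
  · omega
  exact hrest k hki hkj

end CommSemiring

variable [CommRing R] {f : MvPolynomial σ R}

lemma coeff_negSubst_lex_degree (hf : f.IsSymmetric) (hij : i < j)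
    (heq : lex.degree f j = lex.degree f i) :
    coeff (mergeExponent i j (lex.degree f)) (negSubst R i j f) =
      (-1) ^ lex.degree f j * lex.leadingCoeff f := by
  set μ := lex.degree f
  calc coeff (mergeExponent i j μ) (negSubst R i j f)
      = ∑ s ∈ f.support, coeff (mergeExponent i j μ)
          (negSubst R i j (monomial s (coeff s f))) := by
        rw [← coeff_sum, ← map_sum, ← as_sum]
    _ = coeff (mergeExponent i j μ) (negSubst R i j (monomial μ (coeff μ f))) := by
        refine Finset.sum_eq_single μ (fun s hs hsμ => ?_) fun hμs => ?_
        · rw [negSubst_monomial, coeff_monomial, if_neg]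
          exact fun hmerge => hsμ (eq_lex_degree_of_mergeExponent_eq hf hij heq hs hmerge)
        · rw [notMem_support_iff.1 hμs, monomial_zero, map_zero, coeff_zero]
    _ = (-1) ^ μ j * lex.leadingCoeff f := by
        rw [negSubst_monomial, coeff_monomial, if_pos rfl, leadingCoeff]

theorem lex_degree_lt_of_mem_cancellationSubalgebra (hsymm : f.IsSymmetric) (hij : i < j)
    (hcancel : f ∈ cancellationSubalgebra R i j) (hj : lex.degree f j ≠ 0) :
    lex.degree f j < lex.degree f i := by
  have hf : f ≠ 0 := by rintro rfl; simp at hj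
  refine lt_of_le_of_ne (apply_le_lex_degree_of_isSymmetric hsymm (lex.degree_mem_support hf)
    hij.le fun _ _ => rfl) fun heq => ?_
  have hcoeff := coeff_negSubst_lex_degree hsymm hij heq
  rw [coeff_negSubst_eq_zero hcancel (by simp [mergeExponent, hj])] at hcoeff
  exact lex.leadingCoeff_ne_zero_iff.2 hf
    ((isUnit_one.neg.pow _).mul_right_eq_zero.1 hcoeff.symm)

lemma monLex_iff_lex_lt {n : ℕ} {m m' : Fin n →₀ ℕ} : MonLex m m' ↔ m ≺[lex] m' := by
  rw [lex_lt_iff, Finsupp.Lex.lt_iff]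
  exact exists_congr fun _ => and_comm

lemma lex_degree_eq_of_forall_monLex {R : Type*} [CommSemiring R] {n : ℕ}
    {f : MvPolynomial (Fin n) R} {μ : Fin n →₀ ℕ} (hμ : μ ∈ f.support)
    (hmax : ∀ m ∈ f.support, m ≠ μ → MonLex m μ) : lex.degree f = μ := by
  by_contra hne
  have hf : f ≠ 0 := by rintro rfl; simp at hμ
  exact (lex.le_degree hμ).not_gt
    (monLex_iff_lex_lt.1 (hmax _ (lex.degree_mem_support hf) hne))

end LexDegree

section WeightedDegree

variable {R τ : Type*} [CommSemiring R] {w : τ → ℕ}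

lemma card_vars_le_weightedTotalDegree (hw : Function.Injective w) (hpos : ∀ v, 0 < w v)
    (g : MvPolynomial τ R) : g.vars.card ≤ g.weightedTotalDegree w := by
  have hmaps : ∀ v ∈ g.vars, w v ∈ Finset.Icc 1 (g.weightedTotalDegree w) := by
    intro v hv
    obtain ⟨m, hm, hvm⟩ := (mem_vars_iff_mem_support v).1 hv
    have hle : w v ≤ g.weightedTotalDegree w :=
      (Finsupp.le_weight_of_ne_zero' w (Finsupp.mem_support_iff.1 hvm)).trans
        (le_weightedTotalDegree w hm)
    exact Finset.mem_Icc.2 ⟨hpos v, hle⟩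
  simpa using Finset.card_le_card_of_injOn w hmaps hw.injOn

lemma card_vars_le_sup_sum_mul (hw : Function.Injective w) (hpos : ∀ v, 0 < w v)
    (g : MvPolynomial τ R) : g.vars.card ≤ g.support.sup fun m => m.sum fun v e => w v * e := by
  simpa only [weightedTotalDegree, Finsupp.weight_apply, smul_eq_mul, mul_comm] using
    card_vars_le_weightedTotalDegree hw hpos g

end WeightedDegree

lemma psubst_eq_oddPsumHom (n : ℕ) (g : MvPolynomial {k : ℕ // Odd k} ℚ) :
    psubst n g = oddPsumHom (Fin n) ℚ g :=
  rfl

theorem statement_15_general {R σ : Type*} [CommRing R] [IsDomain R] [CharZero R] [Fintype σ]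
    [LinearOrder σ] {g : MvPolynomial {k : ℕ // Odd k} R} (hg : g ≠ 0)
    (hcard : g.vars.card ≤ Fintype.card σ) :
    oddPsumHom σ R g ≠ 0 ∧ ∀ i j, i < j →
      MonomialOrder.lex.degree (oddPsumHom σ R g) j ≠ 0 →
      MonomialOrder.lex.degree (oddPsumHom σ R g) j <
        MonomialOrder.lex.degree (oddPsumHom σ R g) i :=
  ⟨oddPsumHom_ne_zero hg hcard, fun _ _ hij =>
    lex_degree_lt_of_mem_cancellationSubalgebra (oddPsumHom_isSymmetric g) hij <|
      oddPsumHom_mem (fun _ hk => psum_mem_cancellationSubalgebra hij.ne hk) g⟩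

/-- Let `g ≠ 0` be a polynomial in `T_1, T_3, T_5, …` (with `T_{2k-1}` of
weighted degree `2k-1`), `d` its maximal weighted degree, and `n > d`.  Then the polynomial
`f` obtained from `g` by substituting the odd power sums `p_{2k-1}(x_1, …, x_n)` is nonzero,
and the exponents of its lexicographically largest monomial are strictly decreasing. -/
theorem statement_15 (n : ℕ) (g : MvPolynomial {k : ℕ // Odd k} ℚ) (hg : g ≠ 0)
    (hn : g.support.sup (fun m => m.sum fun v e => (v : ℕ) * e) < n) :
    psubst n g ≠ 0 ∧
    ∀ μ : Fin n →₀ ℕ,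
      (μ ∈ (psubst n g).support ∧ ∀ m ∈ (psubst n g).support, m ≠ μ → MonLex m μ) →
      ∀ i j : Fin n, i < j → μ j ≠ 0 → μ j < μ i := by
  have hcard := (card_vars_le_sup_sum_mul Subtype.val_injective (fun v => v.2.pos) g).trans hn.le
  have h := statement_15_general (σ := Fin n) hg (by rwa [Fintype.card_fin])
  rw [psubst_eq_oddPsumHom]
  exact ⟨h.1, fun μ hμ => lex_degree_eq_of_forall_monLex hμ.1 hμ.2 ▸ h.2⟩

end PowerSumLex
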